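/- For every natural number n, every twice differentiable function ω : ℝ → ℂ satisfying ω''(x) − 2(x + 4x/(1+2x²))·ω'(x) + 2n·ω(x) = 0 for all x ∈ ℝ is a linear combination of α_n and β_n: there exist k₁, k₂ ∈ ℂ with ω(x) = k₁·α_n(x) + k₂·β_n(x) for all x ∈ ℝ, where α_n := Ĥ_n for n ∉ {1,2}, α₁ := h₁, and α₂ := h₂. -/

import Mathlib

/-- Physicists' Hermite polynomials via the Rodrigues formula. -/
noncomputable def Hr (n : ℕ) (x : ℝ) : ℝ :=
  (-1) ^ n * Real.exp (x ^ 2) * iteratedDeriv n (fun t => Real.exp (-t ^ 2)) x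

/-- The function Ĥₙ. -/
noncomputable def Hhatr (n : ℕ) (x : ℝ) : ℝ :=
  Hr n x + 4 * (n : ℝ) * Hr (n - 2) x + 4 * (n : ℝ) * ((n : ℝ) - 3) * Hr (n - 4) x

/-- The error function. -/
noncomputable def erf (x : ℝ) : ℝ :=
  (2 / Real.sqrt Real.pi) * ∫ t in (0 : ℝ)..x, Real.exp (-t ^ 2)

/-- The non-polynomial solution Ĥ₁. -/
noncomputable def h1 (x : ℝ) : ℝ :=
  4 * x + Real.sqrt Real.pi * Real.exp (x ^ 2) * (1 - 2 * x ^ 2) * (1 - erf x)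

/-- The non-polynomial solution Ĥ₂. -/
noncomputable def h2 (x : ℝ) : ℝ :=
  2 + 4 * x ^ 2 + 4 * Real.sqrt Real.pi * x * Real.exp (x ^ 2) * (1 - erf x)

/-- αₙ : Ĥₙ for n ∉ {1,2}, the non-polynomial solutions h₁, h₂ for n = 1, 2. -/
noncomputable def alphaF (n : ℕ) (x : ℝ) : ℂ :=
  if n = 1 then (h1 x : ℂ) else if n = 2 then (h2 x : ℂ) else (Hhatr n x : ℂ)

/-- Even coefficients c_{2k}(n) of the generalized power series. -/
noncomputable def ceven (n k : ℕ) : ℂ :=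
  if k = 0 then 1
  else if k = 1 then -(n : ℂ)
  else (-1) ^ k * 2 ^ k * (n : ℂ) * ((n : ℂ) - ((2 * (k : ℂ) - 1) ^ 2 + 1)) *
    (∏ j ∈ Finset.Icc 1 (k - 2), ((n : ℂ) - 2 * (1 + (j : ℂ)))) /
      (Nat.factorial (2 * k) : ℂ)

/-- Odd coefficients: `codd n k` is c_{2k-1}(n), for k ≥ 1. -/
noncomputable def codd (n k : ℕ) : ℂ :=
  if k ≤ 1 then 1
  else (-1) ^ (k + 1) * 2 ^ (k - 1) * ((n : ℂ) - ((2 * ((k : ℂ) - 1)) ^ 2 + 1)) *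
    (∏ j ∈ Finset.Icc 1 (k - 2), ((n : ℂ) - (2 * (1 + (j : ℂ)) - 1))) /
      (Nat.factorial (2 * k - 1) : ℂ)

/-- μₙ(z) = Σ_{k≥0} c_{2k}(n)·z^{2k}. -/
noncomputable def muF (n : ℕ) (z : ℂ) : ℂ := ∑' k : ℕ, ceven n k * z ^ (2 * k)

/-- νₙ(z) = Σ_{k≥1} c_{2k-1}(n)·z^{2k-1}. -/
noncomputable def nuF (n : ℕ) (z : ℂ) : ℂ := ∑' k : ℕ, codd n (k + 1) * z ^ (2 * k + 1)

/-- βₙ = μₙ + νₙ. -/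
noncomputable def betaF (n : ℕ) (z : ℂ) : ℂ := muF n z + nuF n z

/-!
If `g` solves Hermite's equation `g'' - 2xg' + 2(n - 3)g = 0` and `f' = (1 + 2x²)g`, then
`(1 + 2x²)(g' - 2xg) - 4xg + 2nf`, which is the left-hand side of the equation for `ω` evaluated
at `f`, has derivative `(1 + 2x²)(g'' - 2xg' + 2(n - 3)g) = 0`. So `f` solves that equation as soon
as it does so at `0`, that is, as soon as `g'(0) = -2n f(0)`.

All the functions in the theorem arise in this way. For `αₙ` with `n ≥ 3` one has `g = 4n Hₙ₋₃`; for
`n = 1, 2` the function `g` is a Hermite function of negative index, built from `exp(x²) erfc(x)`.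
For `βₙ` it is the power series solution with `g(0) = 1`, `g'(0) = -2n`; its recurrence relates the
coefficients of `xᵐ⁻¹` and `xᵐ⁻³`, and adding the first to twice the second, as the factor `1 + 2x²`
requires, produces the factor `n - ((m - 1)² + 1)` in the coefficient `cₘ(n)` of `βₙ`.

The Wronskian of `αₙ` and `βₙ` at `0` is `αₙ(0) - αₙ'(0) ≠ 0`, so by Abel's identity the two
functions span all solutions.
-/

section LinearODE

/-- `f` is a solution on `ℝ` of `f'' + p f' + q f = 0`. The derivative `f'` is part of the data, so
that initial values of `f'` can be stated without `deriv`. -/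
structure IsLinearODESolution (p q f f' : ℝ → ℂ) : Prop where
  hasDerivAt (x : ℝ) : HasDerivAt f (f' x) x
  hasDerivAt_deriv (x : ℝ) : HasDerivAt f' (-(p x * f' x + q x * f x)) x

/-- The Wronskian of `f` and `g`, where `f'` and `g'` stand for their derivatives. -/
def wronskian (f f' g g' : ℝ → ℂ) (x : ℝ) : ℂ := f x * g' x - f' x * g x

theorem eq_mul_exp_integral_of_hasDerivAt {W p : ℝ → ℂ} (hp : Continuous p)
    (hW : ∀ x, HasDerivAt W (-(p x * W x)) x) (x₀ x : ℝ) :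
    W x = W x₀ * Complex.exp (-∫ t in x₀..x, p t) := by
  let F : ℝ → ℂ := fun y => W y * Complex.exp (∫ t in x₀..y, p t)
  have hF (y : ℝ) : HasDerivAt F 0 y := by
    have hint : HasDerivAt (fun y => ∫ t in x₀..y, p t) (p y) y :=
      intervalIntegral.integral_hasDerivAt_right (hp.intervalIntegrable _ _)
        (hp.stronglyMeasurableAtFilter _ _) hp.continuousAt
    exact ((hW y).mul hint.cexp).congr_deriv (by ring)
  have hconst : F x = F x₀ :=
    is_const_of_deriv_eq_zero (fun y => (hF y).differentiableAt) (fun y => (hF y).deriv) x x₀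
  rw [Complex.exp_neg, ← div_eq_mul_inv, eq_div_iff (Complex.exp_ne_zero _)]
  simpa [F] using hconst

namespace IsLinearODESolution

variable {p q f f' g g' w w' : ℝ → ℂ}

theorem hasDerivAt_wronskian (hf : IsLinearODESolution p q f f')
    (hg : IsLinearODESolution p q g g') (x : ℝ) :
    HasDerivAt (wronskian f f' g g') (-(p x * wronskian f f' g g' x)) x :=
  (((hf.hasDerivAt x).mul (hg.hasDerivAt_deriv x)).sub
    ((hf.hasDerivAt_deriv x).mul (hg.hasDerivAt x))).congr_deriv (by unfold wronskian; ring)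

theorem wronskian_eq_mul_exp_integral (hp : Continuous p) (hf : IsLinearODESolution p q f f')
    (hg : IsLinearODESolution p q g g') (x₀ x : ℝ) :
    wronskian f f' g g' x = wronskian f f' g g' x₀ * Complex.exp (-∫ t in x₀..x, p t) :=
  eq_mul_exp_integral_of_hasDerivAt hp (hf.hasDerivAt_wronskian hg) x₀ x

theorem exists_eq_linear_combination (hp : Continuous p) (hf : IsLinearODESolution p q f f')
    (hg : IsLinearODESolution p q g g') {x₀ : ℝ} (hfg : wronskian f f' g g' x₀ ≠ 0)
    (hw : IsLinearODESolution p q w w') :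
    ∃ k₁ k₂ : ℂ, ∀ x, w x = k₁ * f x + k₂ * g x := by
  refine ⟨wronskian w w' g g' x₀ / wronskian f f' g g' x₀,
    wronskian f f' w w' x₀ / wronskian f f' g g' x₀, fun x => ?_⟩
  have cramer : w x * wronskian f f' g g' x =
      wronskian w w' g g' x * f x + wronskian f f' w w' x * g x := by
    unfold wronskian; ring
  rw [hf.wronskian_eq_mul_exp_integral hp hg x₀, hw.wronskian_eq_mul_exp_integral hp hg x₀,
    hf.wronskian_eq_mul_exp_integral hp hw x₀] at cramer
  field_simp
  exact mul_right_cancel₀ (Complex.exp_ne_zero _) (by linear_combination cramer)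

theorem const_mul (hf : IsLinearODESolution p q f f') (c : ℂ) :
    IsLinearODESolution p q (fun x => c * f x) (fun x => c * f' x) where
  hasDerivAt x := (hf.hasDerivAt x).const_mul c
  hasDerivAt_deriv x := ((hf.hasDerivAt_deriv x).const_mul c).congr_deriv (by ring)

end IsLinearODESolution

end LinearODE

section ExceptionalHermite

/-- `g` is a solution of Hermite's equation `g'' - 2xg' + 2νg = 0`, with derivative `g'`. -/
abbrev IsHermiteSolution (ν : ℂ) (g g' : ℝ → ℂ) : Prop :=
  IsLinearODESolution (fun x => -(2 * x)) (fun _ => 2 * ν) g g'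

/-- `f` is a solution of the exceptional Hermite equation
`f'' - 2(x + 4x/(1 + 2x²))f' + 2νf = 0`, with derivative `f'`. -/
abbrev IsExceptionalHermiteSolution (ν : ℂ) (f f' : ℝ → ℂ) : Prop :=
  IsLinearODESolution (fun x => -(2 * ((x : ℂ) + 4 * x / (1 + 2 * (x : ℂ) ^ 2))))
    (fun _ => 2 * ν) f f'

theorem one_add_two_mul_sq_ne_zero (x : ℝ) : 1 + 2 * (x : ℂ) ^ 2 ≠ 0 := by
  have : 1 + 2 * x ^ 2 ≠ 0 := by positivity
  exact_mod_cast this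

theorem continuous_exceptionalHermite_drift :
    Continuous fun x : ℝ => -(2 * ((x : ℂ) + 4 * x / (1 + 2 * (x : ℂ) ^ 2))) := by
  fun_prop (disch := exact one_add_two_mul_sq_ne_zero)

theorem hasDerivAt_one_add_two_mul_sq (x : ℝ) :
    HasDerivAt (fun x : ℝ => 1 + 2 * (x : ℂ) ^ 2) (4 * (x : ℂ)) x :=
  ((((hasDerivAt_id x).ofReal_comp.pow 2).const_mul 2).const_add 1).congr_deriv
    (by simp only [id, Complex.ofReal_one]; push_cast; ring)

variable {μ ν : ℂ} {f g g' : ℝ → ℂ}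

theorem IsHermiteSolution.derivative (hg : IsHermiteSolution ν g g') :
    IsHermiteSolution (ν - 1) g' (fun x => 2 * x * g' x - 2 * ν * g x) where
  hasDerivAt x := (hg.hasDerivAt_deriv x).congr_deriv (by ring)
  hasDerivAt_deriv x := by
    have h := (((hasDerivAt_id x).ofReal_comp.const_mul 2).mul (hg.hasDerivAt_deriv x)).sub
      ((hg.hasDerivAt x).const_mul (2 * ν))
    exact h.congr_deriv (by simp only [id, Complex.ofReal_one]; ring)

theorem IsHermiteSolution.exceptional_eq_zero (hg : IsHermiteSolution μ g g') (hν : ν = μ + 3)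
    (hf : ∀ x : ℝ, HasDerivAt f ((1 + 2 * (x : ℂ) ^ 2) * g x) x) (h0 : g' 0 = -(2 * ν * f 0))
    (x : ℝ) :
    (1 + 2 * (x : ℂ) ^ 2) * (g' x - 2 * x * g x) - 4 * x * g x + 2 * ν * f x = 0 := by
  let Φ : ℝ → ℂ := fun x =>
    (1 + 2 * (x : ℂ) ^ 2) * (g' x - 2 * x * g x) - 4 * x * g x + 2 * ν * f x
  have hΦ (x : ℝ) : HasDerivAt Φ 0 x := by
    have hx : HasDerivAt (fun x : ℝ => (x : ℂ)) 1 x := (hasDerivAt_id x).ofReal_comp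
    have h := (((hasDerivAt_one_add_two_mul_sq x).mul ((hg.hasDerivAt_deriv x).sub
      ((hx.const_mul 2).mul (hg.hasDerivAt x)))).sub
        ((hx.const_mul 4).mul (hg.hasDerivAt x))).add ((hf x).const_mul (2 * ν))
    exact h.congr_deriv (by simp only [Pi.sub_apply, Pi.mul_apply, hν]; ring)
  have hconst : Φ x = Φ 0 :=
    is_const_of_deriv_eq_zero (fun y => (hΦ y).differentiableAt) (fun y => (hΦ y).deriv) x 0
  simpa [Φ, h0] using hconst

theorem IsHermiteSolution.isExceptionalHermiteSolution (hg : IsHermiteSolution μ g g')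
    (hν : ν = μ + 3) (hf : ∀ x : ℝ, HasDerivAt f ((1 + 2 * (x : ℂ) ^ 2) * g x) x)
    (h0 : g' 0 = -(2 * ν * f 0)) :
    IsExceptionalHermiteSolution ν f (fun x => (1 + 2 * (x : ℂ) ^ 2) * g x) where
  hasDerivAt := hf
  hasDerivAt_deriv x := by
    refine ((hasDerivAt_one_add_two_mul_sq x).mul (hg.hasDerivAt x)).congr_deriv ?_
    have hdiv := div_mul_cancel₀ (4 * (x : ℂ)) (one_add_two_mul_sq_ne_zero x)
    linear_combination hg.exceptional_eq_zero hν hf h0 x - 2 * g x * hdiv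

end ExceptionalHermite

section HermitePolynomials

theorem hasDerivAt_exp_sq (x : ℝ) :
    HasDerivAt (fun x => Real.exp (x ^ 2)) (2 * x * Real.exp (x ^ 2)) x :=
  (hasDerivAt_pow 2 x).exp.congr_deriv (by push_cast; ring)

theorem Hr_zero (x : ℝ) : Hr 0 x = 1 := by
  simp [Hr, ← Real.exp_add]

theorem hasDerivAt_Hr (n : ℕ) (x : ℝ) :
    HasDerivAt (Hr n) (2 * x * Hr n x - Hr (n + 1) x) x := by
  have hsmooth : ContDiff ℝ ⊤ (fun t : ℝ => Real.exp (-t ^ 2)) := by fun_prop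
  have hiter : HasDerivAt (iteratedDeriv n (fun t : ℝ => Real.exp (-t ^ 2)))
      (iteratedDeriv (n + 1) (fun t : ℝ => Real.exp (-t ^ 2)) x) x := by
    rw [iteratedDeriv_succ]
    exact (hsmooth.differentiable_iteratedDeriv n (mod_cast WithTop.coe_lt_top _) x).hasDerivAt
  exact (((hasDerivAt_exp_sq x).const_mul ((-1) ^ n)).mul hiter).congr_deriv
    (by unfold Hr; ring)

theorem Hr_one (x : ℝ) : Hr 1 x = 2 * x := by
  have h := hasDerivAt_Hr 0 x
  rw [funext Hr_zero] at h
  linarith [h.unique (hasDerivAt_const x 1)]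

theorem Hr_add_two (n : ℕ) (x : ℝ) :
    Hr (n + 2) x = 2 * x * Hr (n + 1) x - 2 * (n + 1) * Hr n x := by
  induction n generalizing x with
  | zero =>
    have h := hasDerivAt_Hr 1 x
    rw [funext Hr_one] at h
    have h2 := h.unique ((hasDerivAt_id x).const_mul 2)
    rw [Hr_one, Hr_zero]
    push_cast
    linear_combination -h2
  | succ n ih =>
    have hd : HasDerivAt (Hr (n + 2)) _ x :=
      ((((hasDerivAt_id x).const_mul 2).mul (hasDerivAt_Hr (n + 1) x)).sub
        ((hasDerivAt_Hr n x).const_mul (2 * ((n : ℝ) + 1)))).congr_of_eventuallyEq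
          (.of_forall ih)
    have h := (hasDerivAt_Hr (n + 2) x).unique hd
    simp only [id] at h
    push_cast
    linear_combination -h + 2 * x * ih x

theorem two_mul_self_mul_Hr_pred (n : ℕ) (x : ℝ) :
    2 * n * Hr (n - 1) x = 2 * x * Hr n x - Hr (n + 1) x := by
  cases n with
  | zero => simp [Hr_zero, Hr_one]
  | succ n =>
    rw [Hr_add_two, Nat.add_sub_cancel]
    push_cast
    ring

theorem Hr_apply_zero_eq_zero_iff (n : ℕ) : Hr n 0 = 0 ↔ Odd n := by
  induction n using Nat.twoStepInduction with
  | zero => simp [Hr_zero]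
  | one => simp [Hr_one]
  | more n ih _ =>
    have : (n : ℝ) + 1 ≠ 0 := by positivity
    simp [Hr_add_two, this, ih, Nat.odd_add]

theorem isHermiteSolution_Hr (n : ℕ) :
    IsHermiteSolution n (fun x => (Hr n x : ℂ))
      (fun x => ((2 * x * Hr n x - Hr (n + 1) x : ℝ) : ℂ)) where
  hasDerivAt x := (hasDerivAt_Hr n x).ofReal_comp
  hasDerivAt_deriv x := by
    have h := ((((hasDerivAt_id x).const_mul 2).mul (hasDerivAt_Hr n x)).sub
      (hasDerivAt_Hr (n + 1) x)).ofReal_comp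
    refine h.congr_deriv ?_
    simp only [id, Hr_add_two]
    push_cast
    ring

end HermitePolynomials

section ExceptionalHermitePolynomials

theorem Hhatr_zero (x : ℝ) : Hhatr 0 x = 1 := by
  simp [Hhatr, Hr_zero]

theorem Hhatr_add_three (m : ℕ) (x : ℝ) :
    Hhatr (m + 3) x =
      Hr (m + 3) x + 2 * (m + 3) * Hr (m + 1) x + 4 * (m + 3) * x * Hr m x := by
  have hpred := two_mul_self_mul_Hr_pred m x
  rw [Hhatr, show m + 3 - 2 = m + 1 by lia, show m + 3 - 4 = m - 1 by lia]
  push_cast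
  linear_combination 2 * ((m : ℝ) + 3) * hpred

theorem hasDerivAt_Hhatr_add_three (m : ℕ) (x : ℝ) :
    HasDerivAt (Hhatr (m + 3)) ((1 + 2 * x ^ 2) * (4 * (m + 3) * Hr m x)) x := by
  rw [funext (Hhatr_add_three m)]
  have h := ((hasDerivAt_Hr (m + 3) x).add
    ((hasDerivAt_Hr (m + 1) x).const_mul (2 * ((m : ℝ) + 3)))).add
      (((hasDerivAt_id x).const_mul (4 * ((m : ℝ) + 3))).mul (hasDerivAt_Hr m x))
  refine h.congr_deriv ?_
  simp only [id, Hr_add_two]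
  push_cast
  ring

theorem Hhatr_add_three_apply_zero (m : ℕ) : Hhatr (m + 3) 0 = 2 * Hr (m + 1) 0 := by
  rw [Hhatr_add_three, Hr_add_two]
  push_cast
  ring

theorem Hhatr_add_three_apply_zero_ne (m : ℕ) : Hhatr (m + 3) 0 ≠ 4 * (m + 3) * Hr m 0 := by
  rw [Hhatr_add_three_apply_zero]
  rcases Nat.even_or_odd m with heven | hodd
  · rw [(Hr_apply_zero_eq_zero_iff (m + 1)).2 heven.add_one, mul_zero]
    have : Hr m 0 ≠ 0 := by simpa [Hr_apply_zero_eq_zero_iff] using heven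
    positivity
  · rw [(Hr_apply_zero_eq_zero_iff m).2 hodd, mul_zero]
    have : Hr (m + 1) 0 ≠ 0 := by simpa [Hr_apply_zero_eq_zero_iff] using hodd.add_one
    positivity

end ExceptionalHermitePolynomials

section ScaledErfc

/-- The scaled complementary error function `√π exp(x²) erfc(x)`, a multiple of the Hermite function
of index `-1`. -/
noncomputable def scaledErfc (x : ℝ) : ℝ :=
  Real.sqrt Real.pi * Real.exp (x ^ 2) * (1 - erf x)

theorem scaledErfc_zero : scaledErfc 0 = Real.sqrt Real.pi := by
  simp [scaledErfc, erf]

theorem hasDerivAt_erf (x : ℝ) :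
    HasDerivAt erf (2 / Real.sqrt Real.pi * Real.exp (-x ^ 2)) x := by
  have hc : Continuous (fun t : ℝ => Real.exp (-t ^ 2)) := by fun_prop
  exact (intervalIntegral.integral_hasDerivAt_right (hc.intervalIntegrable _ _)
    (hc.stronglyMeasurableAtFilter _ _) hc.continuousAt).const_mul _

theorem hasDerivAt_scaledErfc (x : ℝ) : HasDerivAt scaledErfc (2 * x * scaledErfc x - 2) x := by
  have h := ((hasDerivAt_exp_sq x).const_mul (Real.sqrt Real.pi)).mul
    ((hasDerivAt_erf x).const_sub 1)
  refine h.congr_deriv ?_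
  have hexp : Real.exp (x ^ 2) * Real.exp (-x ^ 2) = 1 := by simp [← Real.exp_add]
  unfold scaledErfc
  field_simp
  linear_combination -hexp

theorem isHermiteSolution_scaledErfc :
    IsHermiteSolution (-1) (fun x => (scaledErfc x : ℂ))
      (fun x => ((2 * x * scaledErfc x - 2 : ℝ) : ℂ)) where
  hasDerivAt x := (hasDerivAt_scaledErfc x).ofReal_comp
  hasDerivAt_deriv x := by
    have h := ((((hasDerivAt_id x).const_mul 2).mul
      (hasDerivAt_scaledErfc x)).sub_const 2).ofReal_comp
    refine h.congr_deriv ?_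
    simp only [id]
    push_cast
    ring

theorem hasDerivAt_h1 (x : ℝ) :
    HasDerivAt h1 ((1 + 2 * x ^ 2) * (-1 * (2 * x * scaledErfc x - 2))) x := by
  have hh1 : h1 = fun x => 4 * x + (1 - 2 * x ^ 2) * scaledErfc x := by
    funext x; unfold h1 scaledErfc; ring
  rw [hh1]
  have h := ((hasDerivAt_id x).const_mul 4).add
    ((((hasDerivAt_pow 2 x).const_mul 2).const_sub 1).mul (hasDerivAt_scaledErfc x))
  exact h.congr_deriv (by push_cast; ring)

theorem h1_zero : h1 0 = Real.sqrt Real.pi := by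
  simp [h1, erf]

theorem hasDerivAt_h2 (x : ℝ) :
    HasDerivAt h2 ((1 + 2 * x ^ 2) * (4 * scaledErfc x)) x := by
  have hh2 : h2 = fun x => 2 + 4 * x ^ 2 + 4 * x * scaledErfc x := by
    funext x; unfold h2 scaledErfc; ring
  rw [hh2]
  have h := (((hasDerivAt_pow 2 x).const_mul 4).const_add 2).add
    (((hasDerivAt_id x).const_mul 4).mul (hasDerivAt_scaledErfc x))
  exact h.congr_deriv (by simp only [id]; push_cast; ring)

theorem h2_zero : h2 0 = 2 := by
  simp [h2]

end ScaledErfc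

section Alpha

theorem isExceptionalHermiteSolution_one :
    IsExceptionalHermiteSolution 0 (fun _ => 1) (fun _ => 0) where
  hasDerivAt x := hasDerivAt_const x 1
  hasDerivAt_deriv x := by simpa using hasDerivAt_const x (0 : ℂ)

theorem isExceptionalHermiteSolution_h1 :
    IsExceptionalHermiteSolution 1 (fun x => (h1 x : ℂ))
      (fun x => (1 + 2 * (x : ℂ) ^ 2) * (-1 * ((2 * x * scaledErfc x - 2 : ℝ) : ℂ))) := by
  refine IsHermiteSolution.isExceptionalHermiteSolution
    (isHermiteSolution_scaledErfc.derivative.const_mul (-1)) (by norm_num) (fun x => ?_) ?_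
  · exact (hasDerivAt_h1 x).ofReal_comp.congr_deriv (by push_cast; ring)
  · simp [scaledErfc_zero, h1_zero]

theorem isExceptionalHermiteSolution_h2 :
    IsExceptionalHermiteSolution 2 (fun x => (h2 x : ℂ))
      (fun x => (1 + 2 * (x : ℂ) ^ 2) * (4 * scaledErfc x)) := by
  refine IsHermiteSolution.isExceptionalHermiteSolution
    (isHermiteSolution_scaledErfc.const_mul 4) (by norm_num) (fun x => ?_) ?_
  · exact (hasDerivAt_h2 x).ofReal_comp.congr_deriv (by push_cast; ring)
  · norm_num [h2_zero]

theorem isExceptionalHermiteSolution_Hhatr_add_three (m : ℕ) :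
    IsExceptionalHermiteSolution ((m + 3 : ℕ) : ℂ) (fun x => (Hhatr (m + 3) x : ℂ))
      (fun x => (1 + 2 * (x : ℂ) ^ 2) * (4 * (m + 3) * Hr m x)) := by
  refine IsHermiteSolution.isExceptionalHermiteSolution
    ((isHermiteSolution_Hr m).const_mul (4 * (m + 3))) (by push_cast; ring) (fun x => ?_) ?_
  · exact (hasDerivAt_Hhatr_add_three m x).ofReal_comp.congr_deriv (by push_cast; ring)
  · rw [Hhatr_add_three_apply_zero]
    push_cast
    ring

theorem exists_isExceptionalHermiteSolution_alphaF (n : ℕ) :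
    ∃ f', IsExceptionalHermiteSolution n (alphaF n) f' ∧ alphaF n 0 ≠ f' 0 := by
  match n with
  | 0 =>
    have hα : alphaF 0 = fun _ => 1 := by funext x; simp [alphaF, Hhatr_zero]
    rw [hα, Nat.cast_zero]
    exact ⟨_, isExceptionalHermiteSolution_one, one_ne_zero⟩
  | 1 =>
    have hα : alphaF 1 = fun x => (h1 x : ℂ) := by funext x; simp [alphaF]
    have hπ : Real.sqrt Real.pi ≠ 2 := by
      rw [Ne, Real.sqrt_eq_iff_eq_sq Real.pi_pos.le two_pos.le]
      linarith [Real.pi_lt_four]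
    rw [hα, Nat.cast_one]
    exact ⟨_, isExceptionalHermiteSolution_h1,
      by simpa [h1_zero] using Complex.ofReal_injective.ne hπ⟩
  | 2 =>
    have hα : alphaF 2 = fun x => (h2 x : ℂ) := by funext x; simp [alphaF]
    have hπ : (2 : ℝ) ≠ 4 * Real.sqrt Real.pi := by
      have : 1 < Real.sqrt Real.pi := by
        rw [Real.lt_sqrt one_pos.le]; linarith [Real.pi_gt_three]
      linarith
    rw [hα, Nat.cast_two]
    exact ⟨_, isExceptionalHermiteSolution_h2,
      by simpa [h2_zero, scaledErfc_zero] using Complex.ofReal_injective.ne hπ⟩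
  | m + 3 =>
    have hα : alphaF (m + 3) = fun x => (Hhatr (m + 3) x : ℂ) := by funext x; simp [alphaF]
    rw [hα]
    exact ⟨_, isExceptionalHermiteSolution_Hhatr_add_three m,
      by simpa using Complex.ofReal_injective.ne (Hhatr_add_three_apply_zero_ne m)⟩

end Alpha

section EntireSeries

open Filter Topology

/-- `a` is the coefficient sequence of a power series that converges on all of `ℂ`. -/
def IsEntireCoeff (a : ℕ → ℂ) : Prop := ∀ z : ℂ, Summable fun m => a m * z ^ m

/-- The sum of the power series with coefficients `a`; the junk value `0` where it diverges. -/
noncomputable def seriesSum (a : ℕ → ℂ) (z : ℂ) : ℂ := ∑' m, a m * z ^ m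

/-- The coefficients of the termwise derivative. -/
def derivCoeff (a : ℕ → ℂ) (m : ℕ) : ℂ := (m + 1) * a (m + 1)

/-- The coefficients of the termwise primitive with value `c` at `0`. -/
noncomputable def primitiveCoeff (c : ℂ) (a : ℕ → ℂ) : ℕ → ℂ
  | 0 => c
  | m + 1 => a m / (m + 1)

variable {a : ℕ → ℂ}

theorem seriesSum_zero (a : ℕ → ℂ) : seriesSum a 0 = a 0 := by
  simpa [seriesSum, mul_comm] using (HasSum.hasSum_at_zero (𝕜 := ℂ) a).tsum_eq

theorem IsEntireCoeff.of_add_two_eq_mul {ρ : ℕ → ℂ} (ha : ∀ m, a (m + 2) = ρ m * a m)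
    (hρ : Tendsto ρ atTop (𝓝 0)) : IsEntireCoeff a := by
  intro z
  have hratio : ∀ᶠ m in atTop, ‖ρ m * z ^ 2‖ ≤ 1 / 2 := by
    have : Tendsto (fun m => ‖ρ m * z ^ 2‖) atTop (𝓝 0) := by
      simpa only [zero_mul, norm_zero] using (hρ.mul_const (z ^ 2)).norm
    exact this.eventually_le_const (by norm_num)
  have hparity (i : ℕ) : Summable fun k => a (2 * k + i) * z ^ (2 * k + i) := by
    have hmono : Tendsto (fun k => 2 * k + i) atTop atTop :=
      tendsto_atTop_mono (fun k => show k ≤ 2 * k + i by lia) tendsto_id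
    refine summable_of_ratio_norm_eventually_le one_half_lt_one ?_
    filter_upwards [hmono.eventually hratio] with k hk
    calc ‖a (2 * (k + 1) + i) * z ^ (2 * (k + 1) + i)‖
        = ‖ρ (2 * k + i) * z ^ 2‖ * ‖a (2 * k + i) * z ^ (2 * k + i)‖ := by
          rw [← norm_mul, show 2 * (k + 1) + i = 2 * k + i + 2 by ring, ha]
          ring_nf
      _ ≤ 1 / 2 * ‖a (2 * k + i) * z ^ (2 * k + i)‖ := by gcongr
  have heven : Summable fun k => a (2 * k) * z ^ (2 * k) := hparity 0
  exact (HasSum.even_add_odd (f := fun m => a m * z ^ m) heven.hasSum (hparity 1).hasSum).summable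

namespace IsEntireCoeff

theorem hasSum (ha : IsEntireCoeff a) (z : ℂ) :
    HasSum (fun m => a m * z ^ m) (seriesSum a z) :=
  (ha z).hasSum

theorem differentiable_and_hasSum_deriv (ha : IsEntireCoeff a) (z : ℂ) :
    DifferentiableAt ℂ (seriesSum a) z ∧
      HasSum (fun m => derivCoeff a m * z ^ m) (deriv (seriesSum a) z) := by
  let R : ℝ := ‖z‖ + 1
  have hmajorant : Summable fun m => ‖a m * (R : ℂ) ^ m‖ := (ha R).norm
  have hterm (m : ℕ) : DifferentiableOn ℂ (fun w => a m * w ^ m) (Metric.ball 0 R) := by fun_prop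
  have hbound (m : ℕ) (w : ℂ) (hw : w ∈ Metric.ball 0 R) :
      ‖a m * w ^ m‖ ≤ ‖a m * (R : ℂ) ^ m‖ := by
    have hwR : ‖w‖ ≤ ‖(R : ℂ)‖ := by
      simpa using (mem_ball_zero_iff.1 hw).le.trans (le_abs_self R)
    simp only [norm_mul, norm_pow]
    gcongr
  have hz : z ∈ Metric.ball 0 R := by simp [R]
  constructor
  · exact (Complex.differentiableOn_tsum_of_summable_norm hmajorant hterm Metric.isOpen_ball
      hbound).differentiableAt (Metric.isOpen_ball.mem_nhds hz)
  · have hsum : HasSum (fun m => deriv (fun w => a m * w ^ m) z) (deriv (seriesSum a) z) :=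
      Complex.hasSum_deriv_of_summable_norm hmajorant hterm Metric.isOpen_ball hbound hz
    rw [← hasSum_nat_add_iff' 1] at hsum
    simpa [derivCoeff, mul_left_comm, mul_assoc] using hsum

protected theorem derivCoeff (ha : IsEntireCoeff a) : IsEntireCoeff (derivCoeff a) :=
  fun z => (ha.differentiable_and_hasSum_deriv z).2.summable

theorem hasDerivAt (ha : IsEntireCoeff a) (z : ℂ) :
    HasDerivAt (seriesSum a) (seriesSum (derivCoeff a) z) z := by
  obtain ⟨hdiff, hsum⟩ := ha.differentiable_and_hasSum_deriv z
  rw [seriesSum, hsum.tsum_eq]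
  exact hdiff.hasDerivAt

theorem hasSum_natCast_mul (ha : IsEntireCoeff a) (z : ℂ) :
    HasSum (fun m => m * a m * z ^ m) (z * seriesSum (derivCoeff a) z) := by
  have hterm (m : ℕ) : ((m + 1 : ℕ) : ℂ) * a (m + 1) * z ^ (m + 1) =
      z * (derivCoeff a m * z ^ m) := by
    simp only [derivCoeff]
    push_cast
    ring
  rw [← hasSum_nat_add_iff' 1, funext hterm]
  simpa using (ha.derivCoeff.hasSum z).mul_left z

protected theorem primitiveCoeff (ha : IsEntireCoeff a) (c : ℂ) :
    IsEntireCoeff (primitiveCoeff c a) := by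
  intro z
  rw [← summable_nat_add_iff 1]
  refine .of_norm_bounded ((ha z).norm.mul_left ‖z‖) fun m => ?_
  have hm : 1 ≤ ‖(m : ℂ) + 1‖ := by
    rw [← Nat.cast_succ, Complex.norm_natCast]
    exact_mod_cast m.succ_pos
  calc ‖primitiveCoeff c a (m + 1) * z ^ (m + 1)‖ = ‖z‖ * ‖a m * z ^ m‖ / ‖(m : ℂ) + 1‖ := by
        simp only [primitiveCoeff, norm_mul, norm_div, norm_pow]
        ring
    _ ≤ ‖z‖ * ‖a m * z ^ m‖ := div_le_self (by positivity) hm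

end IsEntireCoeff

theorem derivCoeff_primitiveCoeff (c : ℂ) (a : ℕ → ℂ) : derivCoeff (primitiveCoeff c a) = a := by
  funext m
  have hm : (m : ℂ) + 1 ≠ 0 := Nat.cast_add_one_ne_zero m
  simp only [derivCoeff, primitiveCoeff]
  field_simp

end EntireSeries

section HermiteSeries

open Filter Topology

/-- The Taylor coefficients at `0` of the solution of Hermite's equation `g'' - 2xg' + 2νg = 0` with
`g(0) = a₀` and `g'(0) = a₁`. -/
noncomputable def hermiteCoeff (ν a₀ a₁ : ℂ) : ℕ → ℂ
  | 0 => a₀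
  | 1 => a₁
  | m + 2 => 2 * (m - ν) / ((m + 2) * (m + 1)) * hermiteCoeff ν a₀ a₁ m

variable (ν a₀ a₁ : ℂ)

theorem tendsto_hermiteCoeff_ratio :
    Tendsto (fun m : ℕ => 2 * (m - ν) / (((m : ℂ) + 2) * (m + 1))) atTop (𝓝 0) := by
  have hinv : Tendsto (fun m : ℕ => 1 / ((m : ℂ) + 1)) atTop (𝓝 0) :=
    tendsto_one_div_add_atTop_nhds_zero_nat
  have hinv' : Tendsto (fun m : ℕ => 1 / (((m + 1 : ℕ) : ℂ) + 1)) atTop (𝓝 0) :=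
    (tendsto_add_atTop_iff_nat 1).2 hinv
  have hlim := (hinv.const_mul 2).mul ((hinv'.const_mul (ν + 2)).const_sub 1)
  rw [mul_zero, zero_mul] at hlim
  refine hlim.congr fun m => ?_
  have h1 : (m : ℂ) + 1 ≠ 0 := Nat.cast_add_one_ne_zero m
  have h2 : (m : ℂ) + 2 ≠ 0 := mod_cast (by lia : m + 2 ≠ 0)
  rw [show ((m + 1 : ℕ) : ℂ) + 1 = m + 2 by push_cast; ring]
  field_simp
  ring

theorem isEntireCoeff_hermiteCoeff : IsEntireCoeff (hermiteCoeff ν a₀ a₁) :=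
  .of_add_two_eq_mul (fun _ => rfl) (tendsto_hermiteCoeff_ratio ν)

theorem isHermiteSolution_seriesSum_hermiteCoeff :
    IsHermiteSolution ν (fun x => seriesSum (hermiteCoeff ν a₀ a₁) x)
      (fun x => seriesSum (derivCoeff (hermiteCoeff ν a₀ a₁)) x) where
  hasDerivAt x := ((isEntireCoeff_hermiteCoeff ν a₀ a₁).hasDerivAt x).comp_ofReal
  hasDerivAt_deriv x := by
    have ha := isEntireCoeff_hermiteCoeff ν a₀ a₁
    refine (ha.derivCoeff.hasDerivAt x).comp_ofReal.congr_deriv ?_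
    have hterm (m : ℕ) : derivCoeff (derivCoeff (hermiteCoeff ν a₀ a₁)) m * (x : ℂ) ^ m =
        2 * (m * hermiteCoeff ν a₀ a₁ m * x ^ m) - 2 * ν * (hermiteCoeff ν a₀ a₁ m * x ^ m) := by
      have h1 : (m : ℂ) + 1 ≠ 0 := Nat.cast_add_one_ne_zero m
      have h2 : (m : ℂ) + 2 ≠ 0 := mod_cast (by lia : m + 2 ≠ 0)
      simp only [derivCoeff, hermiteCoeff]
      push_cast
      rw [add_assoc, one_add_one_eq_two]
      field_simp
    have hsum := ((ha.hasSum_natCast_mul x).mul_left 2).sub ((ha.hasSum x).mul_left (2 * ν))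
    have hderiv := ha.derivCoeff.derivCoeff.hasSum x
    rw [funext hterm] at hderiv
    linear_combination hderiv.unique hsum

theorem factorial_mul_hermiteCoeff_add_two (m : ℕ) :
    (m + 2).factorial * hermiteCoeff ν a₀ a₁ (m + 2) =
      2 * (m - ν) * (m.factorial * hermiteCoeff ν a₀ a₁ m) := by
  have h1 : (m : ℂ) + 1 ≠ 0 := Nat.cast_add_one_ne_zero m
  have h2 : (m : ℂ) + 2 ≠ 0 := mod_cast (by lia : m + 2 ≠ 0)
  rw [hermiteCoeff, Nat.factorial_succ, Nat.factorial_succ]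
  push_cast
  rw [add_assoc, one_add_one_eq_two]
  field_simp

theorem factorial_mul_hermiteCoeff_two_mul (j : ℕ) :
    (2 * j).factorial * hermiteCoeff ν a₀ a₁ (2 * j) =
      a₀ * (-2) ^ j * ∏ i ∈ Finset.Icc 1 j, (ν - (2 * i - 2)) := by
  induction j with
  | zero => simp [hermiteCoeff]
  | succ j ih =>
    rw [mul_add_one, factorial_mul_hermiteCoeff_add_two, ih, Finset.prod_Icc_succ_top (by lia)]
    push_cast
    ring

theorem factorial_mul_hermiteCoeff_two_mul_add_one (j : ℕ) :
    (2 * j + 1).factorial * hermiteCoeff ν a₀ a₁ (2 * j + 1) =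
      a₁ * (-2) ^ j * ∏ i ∈ Finset.Icc 1 j, (ν - (2 * i - 1)) := by
  induction j with
  | zero => simp [hermiteCoeff]
  | succ j ih =>
    rw [show 2 * (j + 1) + 1 = 2 * j + 1 + 2 by ring, factorial_mul_hermiteCoeff_add_two, ih,
      Finset.prod_Icc_succ_top (by lia)]
    push_cast
    ring

end HermiteSeries

section Beta

/-- The coefficients of `(1 + 2z²) ∑ aₘ zᵐ`. -/
def mulOneAddTwoSqCoeff (a : ℕ → ℂ) : ℕ → ℂ
  | 0 => a 0
  | 1 => a 1
  | m + 2 => a (m + 2) + 2 * a m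

/-- The Taylor coefficients of `βₙ`: those of the primitive of `(1 + 2z²)g` with value `1` at `0`,
where `g` solves Hermite's equation of index `n - 3` with `g(0) = 1` and `g'(0) = -2n`. -/
noncomputable def betaCoeff (n : ℕ) : ℕ → ℂ :=
  primitiveCoeff 1 (mulOneAddTwoSqCoeff (hermiteCoeff (n - 3) 1 (-(2 * n))))

theorem IsEntireCoeff.hasSum_mulOneAddTwoSqCoeff {a : ℕ → ℂ} (ha : IsEntireCoeff a) (z : ℂ) :
    HasSum (fun m => mulOneAddTwoSqCoeff a m * z ^ m) ((1 + 2 * z ^ 2) * seriesSum a z) := by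
  have hshift := (hasSum_nat_add_iff' 2).2 (ha.hasSum z)
  rw [← hasSum_nat_add_iff' 2]
  convert hshift.add ((ha.hasSum z).mul_left (2 * z ^ 2)) using 1
  · funext m
    simp only [mulOneAddTwoSqCoeff]
    ring
  · simp only [Finset.sum_range_succ, Finset.sum_range_zero, mulOneAddTwoSqCoeff]
    ring

theorem betaCoeff_add_three (n m : ℕ) :
    betaCoeff n (m + 3) = 2 * ((m + 2) ^ 2 + 1 - n) *
      (m.factorial * hermiteCoeff (n - 3) 1 (-(2 * n)) m) / (m + 3).factorial := by
  have h1 : (m : ℂ) + 1 ≠ 0 := Nat.cast_add_one_ne_zero m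
  have h2 : (m : ℂ) + 2 ≠ 0 := mod_cast (by lia : m + 2 ≠ 0)
  have h3 : (m : ℂ) + 3 ≠ 0 := mod_cast (by lia : m + 3 ≠ 0)
  have hm : (m.factorial : ℂ) ≠ 0 := mod_cast m.factorial_ne_zero
  have hfact : ((m + 3).factorial : ℂ) = (m + 3) * (m + 2) * (m + 1) * m.factorial := by
    simp only [Nat.factorial_succ]
    push_cast
    ring
  rw [betaCoeff, primitiveCoeff, mulOneAddTwoSqCoeff, hermiteCoeff, hfact,
    show ((m + 2 : ℕ) : ℂ) + 1 = m + 3 by push_cast; ring]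
  field_simp
  ring

theorem ceven_eq_betaCoeff (n k : ℕ) : ceven n k = betaCoeff n (2 * k) := by
  match k with
  | 0 => simp [ceven, betaCoeff, primitiveCoeff]
  | 1 =>
    have hhalf : -(2 * (n : ℂ)) / 2 = -n := by ring
    norm_num [ceven, betaCoeff, primitiveCoeff, mulOneAddTwoSqCoeff, hermiteCoeff, hhalf]
  | j + 2 =>
    have hprod : ∏ i ∈ Finset.Icc 1 j, ((n : ℂ) - 3 - (2 * i - 1)) =
        ∏ i ∈ Finset.Icc 1 j, ((n : ℂ) - 2 * (1 + i)) :=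
      Finset.prod_congr rfl fun i _ => by ring
    rw [show 2 * (j + 2) = 2 * j + 1 + 3 by ring, betaCoeff_add_three,
      factorial_mul_hermiteCoeff_two_mul_add_one, hprod, ceven, if_neg (by lia),
      if_neg (by lia), Nat.add_sub_cancel, show 2 * (j + 2) = 2 * j + 1 + 3 by ring,
      neg_pow (2 : ℂ) j]
    push_cast
    ring

theorem codd_add_one_eq_betaCoeff (n k : ℕ) : codd n (k + 1) = betaCoeff n (2 * k + 1) := by
  match k with
  | 0 => simp [codd, betaCoeff, primitiveCoeff, mulOneAddTwoSqCoeff, hermiteCoeff]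
  | j + 1 =>
    have hprod : ∏ i ∈ Finset.Icc 1 j, ((n : ℂ) - 3 - (2 * i - 2)) =
        ∏ i ∈ Finset.Icc 1 j, ((n : ℂ) - (2 * (1 + i) - 1)) :=
      Finset.prod_congr rfl fun i _ => by ring
    rw [show 2 * (j + 1) + 1 = 2 * j + 3 by ring, betaCoeff_add_three,
      factorial_mul_hermiteCoeff_two_mul, hprod, codd, if_neg (by lia),
      show j + 1 + 1 - 2 = j by lia, show j + 1 + 1 - 1 = j + 1 by lia,
      show 2 * (j + 1 + 1) - 1 = 2 * j + 3 by lia, neg_pow (2 : ℂ) j]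
    push_cast
    ring

variable (n : ℕ)

theorem isEntireCoeff_betaCoeff : IsEntireCoeff (betaCoeff n) :=
  IsEntireCoeff.primitiveCoeff
    (fun z => ((isEntireCoeff_hermiteCoeff _ _ _).hasSum_mulOneAddTwoSqCoeff z).summable) 1

theorem betaF_eq_seriesSum (z : ℂ) : betaF n z = seriesSum (betaCoeff n) z := by
  have hs := isEntireCoeff_betaCoeff n z
  have heven : Summable fun k => betaCoeff n (2 * k) * z ^ (2 * k) :=
    hs.comp_injective (mul_right_injective₀ (two_ne_zero' ℕ))
  have hodd : Summable fun k => betaCoeff n (2 * k + 1) * z ^ (2 * k + 1) :=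
    hs.comp_injective ((add_left_injective 1).comp (mul_right_injective₀ (two_ne_zero' ℕ)))
  simp only [betaF, muF, nuF, ceven_eq_betaCoeff, codd_add_one_eq_betaCoeff]
  exact tsum_even_add_odd (f := fun m => betaCoeff n m * z ^ m) heven hodd

theorem betaF_zero : betaF n 0 = 1 := by
  rw [betaF_eq_seriesSum, seriesSum_zero, betaCoeff, primitiveCoeff]

theorem hasDerivAt_betaF (z : ℂ) :
    HasDerivAt (betaF n)
      ((1 + 2 * z ^ 2) * seriesSum (hermiteCoeff (n - 3) 1 (-(2 * n))) z) z := by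
  rw [funext (betaF_eq_seriesSum n)]
  refine ((isEntireCoeff_betaCoeff n).hasDerivAt z).congr_deriv ?_
  rw [betaCoeff, derivCoeff_primitiveCoeff]
  exact ((isEntireCoeff_hermiteCoeff _ _ _).hasSum_mulOneAddTwoSqCoeff z).tsum_eq

theorem isExceptionalHermiteSolution_betaF :
    IsExceptionalHermiteSolution n (fun x => betaF n x) (fun x =>
      (1 + 2 * (x : ℂ) ^ 2) * seriesSum (hermiteCoeff (n - 3) 1 (-(2 * n))) x) := by
  refine IsHermiteSolution.isExceptionalHermiteSolution
    (isHermiteSolution_seriesSum_hermiteCoeff _ _ _) (by ring)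
    (fun x => (hasDerivAt_betaF n x).comp_ofReal) ?_
  simp [seriesSum_zero, betaF_zero, derivCoeff, hermiteCoeff]

end Beta

theorem stmt18 (n : ℕ) (ω : ℝ → ℂ)
    (hd1 : Differentiable ℝ ω) (hd2 : Differentiable ℝ (deriv ω))
    (hode : ∀ x : ℝ,
      deriv (deriv ω) x
        - 2 * ((x : ℂ) + 4 * (x : ℂ) / (1 + 2 * (x : ℂ) ^ 2)) * deriv ω x
        + 2 * (n : ℂ) * ω x = 0) :
    ∃ k₁ k₂ : ℂ, ∀ x : ℝ, ω x = k₁ * alphaF n x + k₂ * betaF n (x : ℂ) := by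
  have hω : IsExceptionalHermiteSolution n ω (deriv ω) :=
    { hasDerivAt := fun x => (hd1 x).hasDerivAt
      hasDerivAt_deriv := fun x =>
        (hd2 x).hasDerivAt.congr_deriv (by linear_combination hode x) }
  obtain ⟨α', hα, hα0⟩ := exists_isExceptionalHermiteSolution_alphaF n
  refine hα.exists_eq_linear_combination continuous_exceptionalHermite_drift
    (isExceptionalHermiteSolution_betaF n) (x₀ := 0) ?_ hω
  simpa [wronskian, betaF_zero, seriesSum_zero, hermiteCoeff, sub_eq_zero] using hα0
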